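/- Let Ω ⊆ ℝ² be open, p ∈ Ω, and let g, σ : Ω → (symmetric real 2×2 matrices) be C² with g(x) positive definite for all x. For t ∈ ℝ with det((g+tσ)(p)) ≠ 0, let K(g+tσ)(p) = R₁₂₂₁(g+tσ)(p)/det((g+tσ)(p)) denote the coordinate Gauss curvature of the metric g+tσ at p. Then the function t ↦ K(g+tσ)(p) · √(det((g+tσ)(p))) is differentiable at t = 0 with derivative −½ √(det g(p)) · (inc_g σ)(p). (First variation of the Gauss curvature density in the direction σ.) -/

import Mathlib

noncomputable section

open Matrix BigOperators

abbrev Vec2 := Fin 2 → ℝ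
abbrev Mat2 := Matrix (Fin 2) (Fin 2) ℝ

/-- The two-dimensional alternating symbol: `eps2 0 1 = 1`, `eps2 1 0 = -1`, `eps2 i i = 0`. -/
def eps2 (i j : Fin 2) : ℝ := (j.1 : ℝ) - (i.1 : ℝ)

/-- Euclidean rotated normal `ν = (-τ², τ¹)` of a vector `τ`. -/
def rot2 (τ : Vec2) : Vec2 := ![-(τ 1), τ 0]

/-- The `g`-rotated normal `ν̃^k = -g^{kj} ε_{ji} τ^i`. -/
def gNormal (g : Mat2) (τ : Vec2) : Vec2 :=
  fun k => -∑ j, ∑ i, g⁻¹ k j * eps2 j i * τ i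

/-- The `g`-unit tangent `τ̂ = τ / √(τᵀ g τ)`. -/
def gUnitTangent (g : Mat2) (τ : Vec2) : Vec2 :=
  (Real.sqrt (τ ⬝ᵥ g.mulVec τ))⁻¹ • τ

/-- The `g`-unit normal `n̂ = ν̃ / √(ν̃ᵀ g ν̃)`. -/
def gUnitNormal (g : Mat2) (τ : Vec2) : Vec2 :=
  (Real.sqrt (gNormal g τ ⬝ᵥ g.mulVec (gNormal g τ)))⁻¹ • gNormal g τ

/-- Partial derivative `∂_i f (x)`. -/
def pd (i : Fin 2) (f : Vec2 → ℝ) (x : Vec2) : ℝ := fderiv ℝ f x (Pi.single i 1)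

/-- Christoffel symbol of the first kind `Γ_{ijl} = ½(∂_i g_{jl} + ∂_j g_{li} - ∂_l g_{ij})`. -/
def Gamma1 (g : Vec2 → Mat2) (x : Vec2) (i j l : Fin 2) : ℝ :=
  (pd i (fun y => g y j l) x + pd j (fun y => g y l i) x - pd l (fun y => g y i j) x) / 2

/-- Christoffel symbol of the second kind `Γ^k_{ij} = g^{kl} Γ_{ijl}`. -/
def Gamma2 (g : Vec2 → Mat2) (x : Vec2) (i j k : Fin 2) : ℝ :=
  ∑ l, (g x)⁻¹ k l * Gamma1 g x i j l

/-- Euclidean incompatibility `inc σ = ∂₁∂₁σ₂₂ - 2 ∂₁∂₂σ₁₂ + ∂₂∂₂σ₁₁`. -/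
def incE (σ : Vec2 → Mat2) (x : Vec2) : ℝ :=
  pd 0 (pd 0 (fun y => σ y 1 1)) x - 2 * pd 0 (pd 1 (fun y => σ y 0 1)) x
    + pd 1 (pd 1 (fun y => σ y 0 0)) x

/-- Covariant curl `(curl_g σ)_i = (det g)^{-1/2} ε^{jk}(∂_j σ_{ik} - Γ^m_{ji} σ_{mk})`. -/
def curlg (g σ : Vec2 → Mat2) (x : Vec2) (i : Fin 2) : ℝ :=
  (Real.sqrt (g x).det)⁻¹ * ∑ j, ∑ k, eps2 j k *
    (pd j (fun y => σ y i k) x - ∑ m, Gamma2 g x j i m * σ x m k)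

/-- Covariant incompatibility `inc_g σ`. -/
def incg (g σ : Vec2 → Mat2) (x : Vec2) : ℝ :=
  ((g x).det)⁻¹ *
    ((∑ q, ∑ i, ∑ j, ∑ k, eps2 q i * eps2 j k * pd j (pd q (fun y => σ y i k)) x)
      - (∑ q, ∑ i, ∑ j, ∑ k, eps2 q i * eps2 j k *
          pd q (fun y => ∑ m, Gamma2 g y j i m * σ y m k) x)
      - (∑ q, ∑ i, ∑ j, ∑ k, (∑ l, Gamma2 g x l q l) * eps2 q i * eps2 j k *
          (pd j (fun y => σ y i k) x - ∑ m, Gamma2 g x j i m * σ x m k)))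

/-- Coordinate Riemann component `R₁₂₂₁ = ∂₁Γ₂₂₁ - ∂₂Γ₁₂₁ - Γ₁₁ₚΓᵖ₂₂ + Γ₂₁ₚΓᵖ₁₂`. -/
def R1221 (g : Vec2 → Mat2) (x : Vec2) : ℝ :=
  pd 0 (fun y => Gamma1 g y 1 1 0) x - pd 1 (fun y => Gamma1 g y 0 1 0) x
    - (∑ p, Gamma1 g x 0 0 p * Gamma2 g x 1 1 p)
    + (∑ p, Gamma1 g x 1 0 p * Gamma2 g x 0 1 p)


lemma pd_congr' {f h : Vec2 → ℝ} {x : Vec2} (i : Fin 2) (H : f =ᶠ[nhds x] h) :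
    pd i f x = pd i h x := by
  unfold pd; rw [H.fderiv_eq]

lemma pd_add' {f h : Vec2 → ℝ} {x : Vec2} (i : Fin 2) (hf : DifferentiableAt ℝ f x)
    (hh : DifferentiableAt ℝ h x) : pd i (fun y => f y + h y) x = pd i f x + pd i h x := by
  unfold pd; rw [fderiv_fun_add hf hh]; rfl

lemma pd_sub' {f h : Vec2 → ℝ} {x : Vec2} (i : Fin 2) (hf : DifferentiableAt ℝ f x)
    (hh : DifferentiableAt ℝ h x) : pd i (fun y => f y - h y) x = pd i f x - pd i h x := by
  unfold pd; rw [fderiv_fun_sub hf hh]; rfl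

lemma pd_neg' {f : Vec2 → ℝ} {x : Vec2} (i : Fin 2) :
    pd i (fun y => - f y) x = - pd i f x := by
  unfold pd; rw [fderiv_fun_neg]; rfl

lemma pd_mul' {f h : Vec2 → ℝ} {x : Vec2} (i : Fin 2) (hf : DifferentiableAt ℝ f x)
    (hh : DifferentiableAt ℝ h x) :
    pd i (fun y => f y * h y) x = f x * pd i h x + h x * pd i f x := by
  unfold pd; rw [fderiv_fun_mul hf hh]; rfl

lemma pd_const_mul' {f : Vec2 → ℝ} {x : Vec2} (i : Fin 2) (t : ℝ)
    (hf : DifferentiableAt ℝ f x) : pd i (fun y => t * f y) x = t * pd i f x := by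
  unfold pd; rw [fderiv_const_mul hf]; rfl

lemma pd_half' {f : Vec2 → ℝ} {x : Vec2} (i : Fin 2)
    (hf : DifferentiableAt ℝ f x) : pd i (fun y => f y / 2) x = pd i f x / 2 := by
  have : (fun y => f y / 2) = fun y => (1/2 : ℝ) * f y := by funext y; ring
  rw [this, pd_const_mul' i _ hf]; ring

lemma pd_inv' {f : Vec2 → ℝ} {x : Vec2} (i : Fin 2) (hf : DifferentiableAt ℝ f x)
    (h0 : f x ≠ 0) : pd i (fun y => (f y)⁻¹) x = - pd i f x / f x ^ 2 := by
  unfold pd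
  have h : HasFDerivAt (fun y => (f y)⁻¹) _ x :=
    (hasDerivAt_inv h0).comp_hasFDerivAt x hf.hasFDerivAt
  rw [h.fderiv]
  simp
  field_simp

lemma pd_diff {f : Vec2 → ℝ} {x : Vec2} (hf : ContDiffAt ℝ 2 f x) (i : Fin 2) :
    DifferentiableAt ℝ (pd i f) x := by
  have h := hf.fderiv_right (m := 1) (by norm_num)
  have h2 : DifferentiableAt ℝ (fderiv ℝ f) x := h.differentiableAt (by norm_num)
  unfold pd
  exact h2.clm_apply (differentiableAt_const _)

lemma pd_comm' {f : Vec2 → ℝ} {x : Vec2} (hf : ContDiffAt ℝ 2 f x) (i j : Fin 2) :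
    pd i (pd j f) x = pd j (pd i f) x := by
  have h := hf.fderiv_right (m := 1) (by norm_num)
  have h2 : DifferentiableAt ℝ (fderiv ℝ f) x := h.differentiableAt (by norm_num)
  have hs := hf.isSymmSndFDerivAt (by simp)
  have key : ∀ i j, pd i (pd j f) x
      = fderiv ℝ (fderiv ℝ f) x (Pi.single i 1) (Pi.single j 1) := by
    intro i j
    unfold pd
    rw [fderiv_clm_apply h2 (differentiableAt_const _)]
    simp
  rw [key, key]
  exact hs _ _

lemma Gamma1_diff {g : Vec2 → Mat2} {x : Vec2}
    (hg : ∀ i j, ContDiffAt ℝ 2 (fun y => g y i j) x) (i j l : Fin 2) :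
    DifferentiableAt ℝ (fun y => Gamma1 g y i j l) x := by
  unfold Gamma1
  have h := ((pd_diff (hg j l) i).fun_add (pd_diff (hg l i) j)).fun_sub (pd_diff (hg i j) l)
  simpa only [div_eq_mul_inv] using h.mul_const (2 : ℝ)⁻¹

lemma pd_Gamma1 {g : Vec2 → Mat2} {x : Vec2}
    (hg : ∀ i j, ContDiffAt ℝ 2 (fun y => g y i j) x) (q i j l : Fin 2) :
    pd q (fun y => Gamma1 g y i j l) x =
      (pd q (pd i (fun y => g y j l)) x + pd q (pd j (fun y => g y l i)) x
        - pd q (pd l (fun y => g y i j)) x) / 2 := by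
  unfold Gamma1
  have h1 := pd_diff (hg j l) i
  have h2 := pd_diff (hg l i) j
  have h3 := pd_diff (hg i j) l
  rw [pd_half' q ((h1.fun_add h2).fun_sub h3), pd_sub' q (h1.fun_add h2) h3, pd_add' q h1 h2]

lemma Gamma1_add {g σ : Vec2 → Mat2} {x : Vec2} (t : ℝ)
    (hg : ∀ i j, DifferentiableAt ℝ (fun y => g y i j) x)
    (hσ : ∀ i j, DifferentiableAt ℝ (fun y => σ y i j) x) (i j l : Fin 2) :
    Gamma1 (fun y => g y + t • σ y) x i j l = Gamma1 g x i j l + t * Gamma1 σ x i j l := by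
  have key : ∀ i j l, pd i (fun y => (g y + t • σ y) j l) x
      = pd i (fun y => g y j l) x + t * pd i (fun y => σ y j l) x := by
    intro i j l
    simp only [Matrix.add_apply, Matrix.smul_apply, smul_eq_mul]
    rw [pd_add' i (hg j l) ((hσ j l).const_mul t), pd_const_mul' i t (hσ j l)]
  unfold Gamma1
  rw [key, key, key]; ring

/-- adjugate entries -/
def adj2 (M : Mat2) (i j : Fin 2) : ℝ :=
  if i = j then M (1 - i) (1 - j) else - M i j

lemma inv_entry (M : Mat2) (i j : Fin 2) : M⁻¹ i j = (M.det)⁻¹ * adj2 M i j := by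
  rw [Matrix.inv_def, Matrix.adjugate_fin_two]
  fin_cases i <;> fin_cases j <;> simp [adj2]

lemma pd_term {D A B C : Vec2 → ℝ} {x : Vec2} (q : Fin 2)
    (hD : DifferentiableAt ℝ D x) (hA : DifferentiableAt ℝ A x)
    (hB : DifferentiableAt ℝ B x) (hC : DifferentiableAt ℝ C x) (h0 : D x ≠ 0) :
    DifferentiableAt ℝ (fun y => (D y)⁻¹ * A y * B y * C y) x ∧
    pd q (fun y => (D y)⁻¹ * A y * B y * C y) x =
      (- pd q D x / D x ^ 2) * A x * B x * C x
      + (D x)⁻¹ * pd q A x * B x * C x + (D x)⁻¹ * A x * pd q B x * C x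
      + (D x)⁻¹ * A x * B x * pd q C x := by
  have hi : DifferentiableAt ℝ (fun y => (D y)⁻¹) x := hD.fun_inv h0
  refine ⟨((hi.fun_mul hA).fun_mul hB).fun_mul hC, ?_⟩
  rw [pd_mul' q ((hi.fun_mul hA).fun_mul hB) hC, pd_mul' q (hi.fun_mul hA) hB, pd_mul' q hi hA,
    pd_inv' q hD h0]
  ring

lemma adj2_diff {g : Vec2 → Mat2} {x : Vec2}
    (hg : ∀ i j, DifferentiableAt ℝ (fun y => g y i j) x) (i j : Fin 2) :
    DifferentiableAt ℝ (fun y => adj2 (g y) i j) x := by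
  unfold adj2; split_ifs
  · exact hg _ _
  · exact (hg _ _).fun_neg

lemma pd_adj2 {g : Vec2 → Mat2} {x : Vec2} (q i j : Fin 2) :
    pd q (fun y => adj2 (g y) i j) x =
      if i = j then pd q (fun y => g y (1 - i) (1 - j)) x else - pd q (fun y => g y i j) x := by
  unfold adj2; split_ifs
  · rfl
  · exact pd_neg' q

lemma det2_diff {g : Vec2 → Mat2} {x : Vec2}
    (hg : ∀ i j, DifferentiableAt ℝ (fun y => g y i j) x) :
    DifferentiableAt ℝ (fun y => (g y).det) x := by
  simp only [Matrix.det_fin_two]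
  exact ((hg 0 0).fun_mul (hg 1 1)).fun_sub ((hg 0 1).fun_mul (hg 1 0))

lemma pd_det2 {g : Vec2 → Mat2} {x : Vec2}
    (hg : ∀ i j, DifferentiableAt ℝ (fun y => g y i j) x) (q : Fin 2) :
    pd q (fun y => (g y).det) x =
      g x 0 0 * pd q (fun y => g y 1 1) x + g x 1 1 * pd q (fun y => g y 0 0) x
      - (g x 0 1 * pd q (fun y => g y 1 0) x + g x 1 0 * pd q (fun y => g y 0 1) x) := by
  simp only [Matrix.det_fin_two]
  rw [pd_sub' q ((hg 0 0).fun_mul (hg 1 1)) ((hg 0 1).fun_mul (hg 1 0)),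
    pd_mul' q (hg 0 0) (hg 1 1), pd_mul' q (hg 0 1) (hg 1 0)]

lemma pd_G2σ {g σ : Vec2 → Mat2} {x : Vec2}
    (hg : ∀ i j, ContDiffAt ℝ 2 (fun y => g y i j) x)
    (hσ : ∀ i j, DifferentiableAt ℝ (fun y => σ y i j) x)
    (h0 : (g x).det ≠ 0) (q j i k : Fin 2) :
    pd q (fun y => ∑ m, Gamma2 g y j i m * σ y m k) x =
      ∑ m, ∑ l, ((- pd q (fun y => (g y).det) x / (g x).det ^ 2) * adj2 (g x) m l
          * Gamma1 g x j i l * σ x m k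
        + ((g x).det)⁻¹ * pd q (fun y => adj2 (g y) m l) x * Gamma1 g x j i l * σ x m k
        + ((g x).det)⁻¹ * adj2 (g x) m l * pd q (fun y => Gamma1 g y j i l) x * σ x m k
        + ((g x).det)⁻¹ * adj2 (g x) m l * Gamma1 g x j i l * pd q (fun y => σ y m k) x) := by
  have hg1 : ∀ i j, DifferentiableAt ℝ (fun y => g y i j) x :=
    fun i j => (hg i j).differentiableAt (by norm_num)
  have T := fun m l => pd_term q (det2_diff hg1) (adj2_diff hg1 m l) (Gamma1_diff hg j i l)
    (hσ m k) h0
  simp only [Gamma2, inv_entry, Fin.sum_univ_two, add_mul]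
  rw [pd_add' q ((T 0 0).1.fun_add (T 0 1).1) ((T 1 0).1.fun_add (T 1 1).1),
    pd_add' q (T 0 0).1 (T 0 1).1, pd_add' q (T 1 0).1 (T 1 1).1,
    (T 0 0).2, (T 0 1).2, (T 1 0).2, (T 1 1).2]

lemma R_expand {g σ : Vec2 → Mat2} {x : Vec2} (t : ℝ)
    (hg : ∀ i j, ContDiffAt ℝ 2 (fun y => g y i j) x)
    (hσ : ∀ i j, ContDiffAt ℝ 2 (fun y => σ y i j) x) :
    R1221 (fun y => g y + t • σ y) x =
      (pd 0 (fun y => Gamma1 g y 1 1 0) x - pd 1 (fun y => Gamma1 g y 0 1 0) x)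
      + t * (pd 0 (fun y => Gamma1 σ y 1 1 0) x - pd 1 (fun y => Gamma1 σ y 0 1 0) x)
      + ((g x + t • σ x).det)⁻¹ *
        (∑ p, ∑ l, adj2 (g x + t • σ x) p l *
          ((Gamma1 g x 1 0 p + t * Gamma1 σ x 1 0 p) * (Gamma1 g x 0 1 l + t * Gamma1 σ x 0 1 l)
          - (Gamma1 g x 0 0 p + t * Gamma1 σ x 0 0 p)
            * (Gamma1 g x 1 1 l + t * Gamma1 σ x 1 1 l))) := by
  have ev : ∀ (h : Vec2 → Mat2), (∀ i j, ContDiffAt ℝ 2 (fun y => h y i j) x) →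
      ∀ᶠ y in nhds x, ∀ i j, DifferentiableAt ℝ (fun y => h y i j) y := by
    intro h hh
    rw [Filter.eventually_all]; intro i
    rw [Filter.eventually_all]; intro j
    exact ((hh i j).eventually (by simp)).mono fun y hy => hy.differentiableAt (by norm_num)
  have E : ∀ i j l, (fun y => Gamma1 (fun y => g y + t • σ y) y i j l) =ᶠ[nhds x]
      fun y => Gamma1 g y i j l + t * Gamma1 σ y i j l := by
    intro i j l
    filter_upwards [ev g hg, ev σ hσ] with y h1 h2
    exact Gamma1_add t h1 h2 i j l
  have P : ∀ q i j l, pd q (fun y => Gamma1 (fun y => g y + t • σ y) y i j l) x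
      = pd q (fun y => Gamma1 g y i j l) x + t * pd q (fun y => Gamma1 σ y i j l) x := by
    intro q i j l
    rw [pd_congr' q (E i j l), pd_add' q (Gamma1_diff hg i j l)
      ((Gamma1_diff hσ i j l).const_mul t), pd_const_mul' q t (Gamma1_diff hσ i j l)]
  have V : ∀ i j l, Gamma1 (fun y => g y + t • σ y) x i j l
      = Gamma1 g x i j l + t * Gamma1 σ x i j l := fun i j l => (E i j l).eq_of_nhds
  unfold R1221
  rw [P, P]
  simp only [Gamma2, V, inv_entry, Fin.sum_univ_two]
  ring

lemma adj2_add (M S : Mat2) (t : ℝ) (i j : Fin 2) :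
    adj2 (M + t • S) i j = adj2 M i j + t * adj2 S i j := by
  unfold adj2; split_ifs <;> simp <;> ring

lemma cubic_deriv (a a' b b' c c' d d' e e' : ℝ) :
    HasDerivAt (fun t : ℝ => (a + t * a') * ((b + t * b') * (c + t * c')
      - (d + t * d') * (e + t * e')))
      (a' * (b * c - d * e) + a * (b' * c + b * c' - (d' * e + d * e'))) 0 := by
  have A : ∀ u v : ℝ, HasDerivAt (fun t : ℝ => u + t * v) v 0 := by
    intro u v
    simpa using ((hasDerivAt_id (0 : ℝ)).mul_const v).const_add u
  have := (A a a').fun_mul (((A b b').fun_mul (A c c')).fun_sub ((A d d').fun_mul (A e e')))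
  refine this.congr_deriv ?_
  simp

lemma density_deriv (L0 L1 : ℝ) (D N : ℝ → ℝ) (D' N' : ℝ)
    (hD : HasDerivAt D D' 0) (hN : HasDerivAt N N' 0) (h0 : 0 < D 0) :
    HasDerivAt (fun t => (L0 + t * L1 + (D t)⁻¹ * N t) / D t * Real.sqrt (D t))
      (Real.sqrt (D 0) * ((L1 + N' / D 0 - N 0 * D' / D 0 ^ 2) / D 0
        - (L0 + N 0 / D 0) * D' / (2 * D 0 ^ 2))) 0 := by
  have A : HasDerivAt (fun t : ℝ => L0 + t * L1) L1 0 := by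
    simpa using ((hasDerivAt_id (0 : ℝ)).mul_const L1).const_add L0
  have h := ((A.fun_add ((hD.fun_inv h0.ne').fun_mul hN)).fun_div hD h0.ne').fun_mul
    (hD.sqrt h0.ne')
  refine h.congr_deriv ?_
  have hs : 0 < Real.sqrt (D 0) := Real.sqrt_pos.2 h0
  have hq : Real.sqrt (D 0) ^ 2 = D 0 := Real.sq_sqrt h0.le
  generalize Real.sqrt (D 0) = s at *
  rw [← hq]
  field_simp
  ring

/-- first variation of the Gauss curvature density. -/
theorem firstVariation_gaussCurvature_density
    (Ω : Set Vec2) (hΩ : IsOpen Ω)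
    (g σ : Vec2 → Mat2)
    (hg : ∀ i j, ContDiffOn ℝ 2 (fun y => g y i j) Ω)
    (hσ : ∀ i j, ContDiffOn ℝ 2 (fun y => σ y i j) Ω)
    (hg_symm : ∀ x ∈ Ω, (g x).IsSymm) (hσ_symm : ∀ x ∈ Ω, (σ x).IsSymm)
    (hg_pos : ∀ x ∈ Ω, (g x).PosDef)
    (p : Vec2) (hp : p ∈ Ω) :
    HasDerivAt
      (fun t : ℝ => R1221 (fun y => g y + t • σ y) p / (g p + t • σ p).det *
        Real.sqrt (g p + t • σ p).det)
      (-(1 / 2) * Real.sqrt (g p).det * incg g σ p) 0 := by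
  have hgp : ∀ i j, ContDiffAt ℝ 2 (fun y => g y i j) p :=
    fun i j => (hg i j).contDiffAt (hΩ.mem_nhds hp)
  have hσp : ∀ i j, ContDiffAt ℝ 2 (fun y => σ y i j) p :=
    fun i j => (hσ i j).contDiffAt (hΩ.mem_nhds hp)
  have hg1 : ∀ i j, DifferentiableAt ℝ (fun y => g y i j) p :=
    fun i j => (hgp i j).differentiableAt (by norm_num)
  have hσ1 : ∀ i j, DifferentiableAt ℝ (fun y => σ y i j) p :=
    fun i j => (hσp i j).differentiableAt (by norm_num)
  have hdet : 0 < (g p).det := (hg_pos p hp).det_pos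
  have S : ∀ (h : Vec2 → Mat2), (∀ x ∈ Ω, (h x).IsSymm) →
      (∀ x ∈ Ω, h x 1 0 = h x 0 1) ∧
      (∀ i, ∀ x ∈ Ω, pd i (fun y => h y 1 0) x = pd i (fun y => h y 0 1) x) ∧
      (∀ i j, ∀ x ∈ Ω, pd i (pd j (fun y => h y 1 0)) x = pd i (pd j (fun y => h y 0 1)) x) := by
    intro h hs
    have h1 : ∀ x ∈ Ω, h x 1 0 = h x 0 1 := fun x hx => (hs x hx).apply 0 1
    have h2 : ∀ i, ∀ x ∈ Ω, pd i (fun y => h y 1 0) x = pd i (fun y => h y 0 1) x := by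
      intro i x hx
      apply pd_congr'
      filter_upwards [hΩ.mem_nhds hx] with y hy using h1 y hy
    refine ⟨h1, h2, ?_⟩
    intro i j x hx
    apply pd_congr'
    filter_upwards [hΩ.mem_nhds hx] with y hy using h2 j y hy
  obtain ⟨sg0, sg1, sg2⟩ := S g hg_symm
  obtain ⟨ss0, ss1, ss2⟩ := S σ hσ_symm
  have sg0 := sg0 p hp
  have sg1 := fun i => sg1 i p hp
  have sg2 := fun i j => sg2 i j p hp
  have ss0 := ss0 p hp
  have ss1 := fun i => ss1 i p hp
  have ss2 := fun i j => ss2 i j p hp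
  have cg := fun i j => pd_comm' (hgp i j) 1 0
  have cs := fun i j => pd_comm' (hσp i j) 1 0
  have hD : HasDerivAt (fun t : ℝ => (g p + t • σ p).det)
      (σ p 0 0 * g p 1 1 + g p 0 0 * σ p 1 1 - (σ p 0 1 * g p 1 0 + g p 0 1 * σ p 1 0)) 0 := by
    have A : ∀ u v : ℝ, HasDerivAt (fun t : ℝ => u + t * v) v 0 := by
      intro u v
      simpa using ((hasDerivAt_id (0 : ℝ)).mul_const v).const_add u
    simp only [Matrix.det_fin_two, Matrix.add_apply, Matrix.smul_apply, smul_eq_mul]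
    have := ((A (g p 0 0) (σ p 0 0)).fun_mul (A (g p 1 1) (σ p 1 1))).fun_sub
      ((A (g p 0 1) (σ p 0 1)).fun_mul (A (g p 1 0) (σ p 1 0)))
    refine this.congr_deriv ?_
    simp
  have hN := HasDerivAt.fun_sum (u := Finset.univ) fun (a : Fin 2) _ =>
    HasDerivAt.fun_sum (u := Finset.univ) fun (l : Fin 2) _ =>
    cubic_deriv (adj2 (g p) a l) (adj2 (σ p) a l) (Gamma1 g p 1 0 a) (Gamma1 σ p 1 0 a)
      (Gamma1 g p 0 1 l) (Gamma1 σ p 0 1 l) (Gamma1 g p 0 0 a) (Gamma1 σ p 0 0 a)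
      (Gamma1 g p 1 1 l) (Gamma1 σ p 1 1 l)
  have H := density_deriv
    (pd 0 (fun y => Gamma1 g y 1 1 0) p - pd 1 (fun y => Gamma1 g y 0 1 0) p)
    (pd 0 (fun y => Gamma1 σ y 1 1 0) p - pd 1 (fun y => Gamma1 σ y 0 1 0) p)
    _ _ _ _ hD hN (by simpa using hdet)
  refine (H.congr_deriv ?_).congr_of_eventuallyEq (Filter.Eventually.of_forall fun t => ?_)
  swap
  · simp only [R_expand t hgp hσp, adj2_add]
  simp only [zero_smul, add_zero, zero_mul]
  rw [show -(1 / 2) * Real.sqrt (g p).det * incg g σ p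
    = Real.sqrt (g p).det * (-(1 / 2) * incg g σ p) by ring]
  congr 1
  unfold incg
  simp only [pd_G2σ hgp hσ1 hdet.ne']
  simp only [pd_Gamma1 hgp, pd_Gamma1 hσp, pd_adj2, pd_det2 hg1]
  simp only [Gamma2, inv_entry]
  have hDD : (g p).det = g p 0 0 * g p 1 1 - g p 0 1 * g p 0 1 := by
    rw [Matrix.det_fin_two, sg0]
  simp only [Fin.sum_univ_two, eps2, adj2, Gamma1]
  simp [sg0, sg1, sg2, ss0, ss1, ss2, cg, cs, -mul_eq_mul_left_iff, -mul_eq_mul_right_iff]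
  have hd0 := hdet.ne'
  generalize (g p).det = D at *
  clear H hN hD
  generalize g p 0 0 = a at *
  generalize g p 0 1 = b at *
  generalize g p 1 1 = c at *
  clear hg hσ hgp hσp sg1 sg2 ss1 ss2 cg cs S hg_symm hσ_symm hg_pos hg1 hσ1
  generalize pd 0 (fun y => g y 0 0) p = G00d0
  generalize pd 0 (pd 0 (fun y => g y 0 0)) p = G00d00
  generalize pd 0 (pd 1 (fun y => g y 0 0)) p = G00d01
  generalize pd 1 (fun y => g y 0 0) p = G00d1
  generalize pd 1 (pd 1 (fun y => g y 0 0)) p = G00d11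
  generalize pd 0 (fun y => g y 0 1) p = G01d0
  generalize pd 0 (pd 0 (fun y => g y 0 1)) p = G01d00
  generalize pd 0 (pd 1 (fun y => g y 0 1)) p = G01d01
  generalize pd 1 (fun y => g y 0 1) p = G01d1
  generalize pd 1 (pd 1 (fun y => g y 0 1)) p = G01d11
  generalize pd 0 (fun y => g y 1 1) p = G11d0
  generalize pd 0 (pd 0 (fun y => g y 1 1)) p = G11d00
  generalize pd 0 (pd 1 (fun y => g y 1 1)) p = G11d01
  generalize pd 1 (fun y => g y 1 1) p = G11d1
  generalize pd 1 (pd 1 (fun y => g y 1 1)) p = G11d11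
  generalize σ p 0 0 = s00 at *
  generalize pd 0 (fun y => σ y 0 0) p = S00d0
  generalize pd 0 (pd 0 (fun y => σ y 0 0)) p = S00d00
  generalize pd 0 (pd 1 (fun y => σ y 0 0)) p = S00d01
  generalize pd 1 (fun y => σ y 0 0) p = S00d1
  generalize pd 1 (pd 1 (fun y => σ y 0 0)) p = S00d11
  generalize σ p 0 1 = s01 at *
  generalize pd 0 (fun y => σ y 0 1) p = S01d0
  generalize pd 0 (pd 0 (fun y => σ y 0 1)) p = S01d00
  generalize pd 0 (pd 1 (fun y => σ y 0 1)) p = S01d01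
  generalize pd 1 (fun y => σ y 0 1) p = S01d1
  generalize pd 1 (pd 1 (fun y => σ y 0 1)) p = S01d11
  generalize σ p 1 1 = s11 at *
  generalize pd 0 (fun y => σ y 1 1) p = S11d0
  generalize pd 0 (pd 0 (fun y => σ y 1 1)) p = S11d00
  generalize pd 0 (pd 1 (fun y => σ y 1 1)) p = S11d01
  generalize pd 1 (fun y => σ y 1 1) p = S11d1
  generalize pd 1 (pd 1 (fun y => σ y 1 1)) p = S11d11
  field_simp
  subst hDD
  ring
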